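/- arXiv:1507.04073 — 2 statements merged into one kernel-verified Lean document; each statement's English description precedes it below -/
import Mathlib

section
/- Let A = [a_1, ..., a_n] ∈ ℝ^{m×n} with ‖a_i‖₂ = 1 for all i. Consider the von Neumann algorithm with away steps: sequences x_k ∈ Δ_{n−1}, y_k = A x_k, where x_0 is a vertex of Δ_{n−1}, and for each k: j minimizes ⟨a_i, y_k⟩ over i ∈ {1,...,n}, ℓ maximizes ⟨a_i, y_k⟩ over i ∈ S(x_k); if ⟨a_j − y_k, y_k⟩ < ⟨y_k − a_ℓ, y_k⟩ set a := a_j − y_k, u := e_j − x_k, θ_max := 1, otherwise set a := y_k − a_ℓ, u := x_k − e_ℓ, θ_max := (x_k)_ℓ/(1 − (x_k)_ℓ); θ_k minimizes ‖y_k + θ a‖₂ over θ ∈ [0, θ_max]; and x_{k+1} := x_k + θ_k u. If for every iteration i ≤ k the vector A^T y_i has at least one nonpositive component (i.e., the algorithm has not halted), then ‖y_k‖₂² ≤ 8/k for all k ≥ 1. -/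
open scoped RealInnerProductSpace BigOperators

/-- `comb a x = A x`, the combination `∑ i, x i • a i` of the columns `a i` of `A`. -/
noncomputable def comb {m n : ℕ} (a : Fin n → EuclideanSpace ℝ (Fin m)) (x : Fin n → ℝ) :
    EuclideanSpace ℝ (Fin m) := ∑ i, x i • a i

/-- The relative width
`w(A) = min_{x ≥ 0, Ax ≠ 0} max {⟪Ax, a ℓ - a j⟫ / ‖Ax‖ : ℓ ∈ S(x), j ∈ {1,…,n}}`. -/
noncomputable def relWidth {m n : ℕ} (a : Fin n → EuclideanSpace ℝ (Fin m)) : ℝ :=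
  sInf {t : ℝ | ∃ x : Fin n → ℝ, (∀ i, 0 ≤ x i) ∧ comb a x ≠ 0 ∧
    t = sSup {s : ℝ | ∃ ℓ j : Fin n, 0 < x ℓ ∧
      s = ⟪comb a x, a ℓ - a j⟫ / ‖comb a x‖}}

/-- One iteration of the von Neumann algorithm with away steps, mapping `x k` to `x (k+1)`:
`j` minimizes `⟪a i, y k⟫`, `ℓ` maximizes `⟪a i, y k⟫` over the support of `x k`; a regular
step (`d = a j - y k`, `u = e j - x k`, `θmax = 1`) is taken when
`⟪a j - y k, y k⟫ < ⟪y k - a ℓ, y k⟫`, otherwise an away step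
(`d = y k - a ℓ`, `u = x k - e ℓ`, `θmax = (x k) ℓ / (1 - (x k) ℓ)`);
`θ` minimizes `‖y k + θ • d‖` over `[0, θmax]` and `x (k+1) = x k + θ • u`. -/
def VNAwayStep {m n : ℕ} (a : Fin n → EuclideanSpace ℝ (Fin m))
    (x x' : Fin n → ℝ) (y : EuclideanSpace ℝ (Fin m)) : Prop :=
  ∃ (j ℓ : Fin n) (d : EuclideanSpace ℝ (Fin m)) (u : Fin n → ℝ) (θmax θ : ℝ),
    (∀ i, ⟪a j, y⟫ ≤ ⟪a i, y⟫) ∧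
    0 < x ℓ ∧ (∀ i, 0 < x i → ⟪a i, y⟫ ≤ ⟪a ℓ, y⟫) ∧
    ((⟪a j - y, y⟫ < ⟪y - a ℓ, y⟫ ∧
        d = a j - y ∧ u = Pi.single j 1 - x ∧ θmax = 1) ∨
     (¬ (⟪a j - y, y⟫ < ⟪y - a ℓ, y⟫) ∧
        d = y - a ℓ ∧ u = x - Pi.single ℓ 1 ∧ θmax = x ℓ / (1 - x ℓ))) ∧
    0 ≤ θ ∧ θ ≤ θmax ∧
    (∀ θ' : ℝ, 0 ≤ θ' → θ' ≤ θmax → ‖y + θ • d‖ ≤ ‖y + θ' • d‖) ∧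
    x' = x + θ • u


/-- descent inequality -/
lemma vn_quad {m : ℕ} (y d : EuclideanSpace ℝ (Fin m)) (θ : ℝ) :
    ‖y + θ • d‖ ^ 2 = ‖y‖ ^ 2 + 2 * θ * ⟪d, y⟫ + θ ^ 2 * ‖d‖ ^ 2 := by
  rw [norm_add_sq_real, norm_smul, inner_smul_right, real_inner_comm, mul_pow, Real.norm_eq_abs,
    sq_abs]
  ring

lemma vn_comb_single {m n : ℕ} (a : Fin n → EuclideanSpace ℝ (Fin m)) (j : Fin n) :
    comb a (Pi.single j 1) = a j := by
  unfold comb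
  rw [Finset.sum_eq_single j]
  · simp
  · intro b _ hb
    simp [Pi.single_eq_of_ne hb]
  · simp

lemma vn_comb_add {m n : ℕ} (a : Fin n → EuclideanSpace ℝ (Fin m)) (x u : Fin n → ℝ) (θ : ℝ) :
    comb a (x + θ • u) = comb a x + θ • comb a u := by
  unfold comb
  simp [add_smul, Finset.sum_add_distrib, Finset.smul_sum, mul_smul]

lemma vn_comb_sub {m n : ℕ} (a : Fin n → EuclideanSpace ℝ (Fin m)) (x u : Fin n → ℝ) :
    comb a (x - u) = comb a x - comb a u := by
  unfold comb
  simp [sub_smul, Finset.sum_sub_distrib]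

lemma vn_comb_norm {m n : ℕ} (a : Fin n → EuclideanSpace ℝ (Fin m))
    (hnorm : ∀ i, ‖a i‖ = 1) (x : Fin n → ℝ) (h0 : ∀ i, 0 ≤ x i) (h1 : ∑ i, x i = 1) :
    ‖comb a x‖ ≤ 1 := by
  unfold comb
  refine (norm_sum_le _ _).trans ?_
  rw [← h1]
  refine Finset.sum_le_sum fun i _ => ?_
  rw [norm_smul, hnorm, Real.norm_of_nonneg (h0 i), mul_one]

/-- size of the support -/
noncomputable def vnS {n : ℕ} (x : Fin n → ℝ) : ℕ := (Finset.univ.filter fun i => 0 < x i).card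

lemma vn_arith (Y Y' t t' : ℝ) (h0 : 0 ≤ Y) (h1 : Y ≤ 1) (ht : Y * t ≤ 8)
    (hY0 : 0 ≤ Y') (hY' : Y' ≤ Y - Y ^ 2 / 4) (ht0 : 0 ≤ t) (ht' : t' ≤ t + 2) :
    Y' * t' ≤ 8 := by
  have e1 : Y' * t' ≤ Y' * (t + 2) := mul_le_mul_of_nonneg_left ht' hY0
  have e2 : Y' * (t + 2) ≤ (Y - Y ^ 2 / 4) * (t + 2) :=
    mul_le_mul_of_nonneg_right hY' (by linarith)
  nlinarith [mul_nonneg (sub_nonneg.2 ht) (by linarith : 0 ≤ 1 - Y / 4), sq_nonneg Y]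

/-- one step -/
lemma vn_step {m n : ℕ} (a : Fin n → EuclideanSpace ℝ (Fin m))
    (hnorm : ∀ i, ‖a i‖ = 1) (x x' : Fin n → ℝ)
    (h0 : ∀ i, 0 ≤ x i) (h1 : ∑ i, x i = 1)
    (hs : VNAwayStep a x x' (comb a x)) (hh : ∃ j, ⟪a j, comb a x⟫ ≤ 0) :
    (∀ i, 0 ≤ x' i) ∧ ∑ i, x' i = 1 ∧
      ((‖comb a x'‖ ^ 2 ≤ ‖comb a x‖ ^ 2 - (‖comb a x‖ ^ 2) ^ 2 / 4 ∧ vnS x' ≤ vnS x + 1) ∨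
       (‖comb a x'‖ ^ 2 ≤ ‖comb a x‖ ^ 2 ∧ vnS x' + 1 ≤ vnS x)) := by
  obtain ⟨j, l, d, u, θm, θ, hj, hl0, hl, hc, hθ0, hθm, hmin, rfl⟩ := hs
  have hN := vn_comb_norm a hnorm x h0 h1
  obtain ⟨j', hj'⟩ := hh
  have hjn : ⟪a j, comb a x⟫ ≤ 0 := (hj j').trans hj'
  have hle : ∀ i, x i ≤ 1 := fun i => by
    rw [← h1]; exact Finset.single_le_sum (fun i _ => h0 i) (Finset.mem_univ i)
  have hyy : ⟪comb a x, comb a x⟫ = ‖comb a x‖ ^ 2 := real_inner_self_eq_norm_sq _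
  have hcu : comb a u = d := by
    rcases hc with ⟨_, rfl, rfl, _⟩ | ⟨_, rfl, rfl, _⟩ <;> rw [vn_comb_sub, vn_comb_single]
  rw [vn_comb_add, hcu]
  have hd2 : ‖d‖ ≤ 2 := by
    rcases hc with ⟨_, rfl, _, _⟩ | ⟨_, rfl, _, _⟩ <;>
      refine (norm_sub_le _ _).trans ?_ <;> rw [hnorm] <;> linarith
  have hsu : ∑ i, u i = 0 := by
    rcases hc with ⟨_, _, rfl, _⟩ | ⟨_, _, rfl, _⟩ <;> simp [Finset.sum_sub_distrib, h1]
  have hdy : ⟪d, comb a x⟫ ≤ - ‖comb a x‖ ^ 2 := by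
    rcases hc with ⟨_, rfl, _, _⟩ | ⟨h, rfl, _, _⟩
    · rw [inner_sub_left, hyy]; linarith
    · push Not at h
      rw [inner_sub_left (a j), hyy] at h
      linarith
  have hsum : ∑ i, (x + θ • u) i = 1 := by
    simp [Finset.sum_add_distrib, ← Finset.mul_sum, hsu, h1]
  have hNn := norm_nonneg (comb a x)
  generalize comb a x = y at *
  have hdd : ‖d‖ ^ 2 ≤ 4 := by nlinarith [norm_nonneg d]
  have hY0 : 0 ≤ ‖y‖ ^ 2 := by positivity
  have hY1 : ‖y‖ ^ 2 ≤ 1 := by nlinarith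
  have hdesc : ∀ t, 0 ≤ t → t ≤ θm → ‖y + θ • d‖ ^ 2 ≤ ‖y + t • d‖ ^ 2 := fun t a b =>
    pow_le_pow_left₀ (norm_nonneg _) (hmin t a b) 2
  have hgood : ‖y‖ ^ 2 / 4 ≤ θm → ‖y + θ • d‖ ^ 2 ≤ ‖y‖ ^ 2 - (‖y‖ ^ 2) ^ 2 / 4 := by
    intro h
    refine (hdesc _ (by positivity) h).trans ?_
    rw [vn_quad]
    generalize ‖y‖ ^ 2 = Y at *
    nlinarith [mul_le_mul_of_nonneg_left hdy hY0, mul_le_mul_of_nonneg_left hdd (sq_nonneg Y)]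
  have hmono : ‖y + θ • d‖ ^ 2 ≤ ‖y‖ ^ 2 := by
    simpa using hdesc 0 le_rfl (hθ0.trans hθm)
  rcases hc with ⟨_, _, rfl, rfl⟩ | ⟨hlt, hd, rfl, rfl⟩
  · refine ⟨fun i => ?_, hsum, Or.inl ⟨hgood (by linarith), ?_⟩⟩
    · have : 0 ≤ (Pi.single j 1 : Fin n → ℝ) i := by
        by_cases h : i = j
        · subst h; simp
        · simp [Pi.single_eq_of_ne h]
      simp only [Pi.add_apply, Pi.smul_apply, Pi.sub_apply, smul_eq_mul]
      nlinarith [h0 i, mul_nonneg hθ0 this, mul_nonneg (sub_nonneg.2 hθm) (h0 i)]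
    · unfold vnS
      refine (Finset.card_le_card (t := insert j (Finset.univ.filter fun i => 0 < x i)) ?_).trans
        (Finset.card_insert_le _ _)
      intro i hi
      simp only [Finset.mem_filter, Finset.mem_univ, true_and, Finset.mem_insert] at hi ⊢
      by_cases h : i = j
      · exact Or.inl h
      · right
        simp only [Pi.add_apply, Pi.smul_apply, Pi.sub_apply, smul_eq_mul,
          Pi.single_eq_of_ne h] at hi
        by_contra hx
        have : x i = 0 := le_antisymm (not_lt.1 hx) (h0 i)
        simp [this] at hi
  · have hxl : θ * (1 - x l) ≤ x l := by
      rcases (hle l).lt_or_eq with h | h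
      · rwa [le_div_iff₀ (by linarith)] at hθm
      · rw [h]; simp
    have hsup : ∀ i, 0 < (x + θ • (x - Pi.single l 1) : Fin n → ℝ) i → 0 < x i := by
      intro i hi
      by_cases h : i = l
      · rwa [h]
      · simp only [Pi.add_apply, Pi.smul_apply, Pi.sub_apply, smul_eq_mul,
          Pi.single_eq_of_ne h] at hi
        by_contra hx
        have : x i = 0 := le_antisymm (not_lt.1 hx) (h0 i)
        simp [this] at hi
    refine ⟨fun i => ?_, hsum, ?_⟩
    · by_cases h : i = l
      · subst h
        simp
        linarith
      · simp only [Pi.add_apply, Pi.smul_apply, Pi.sub_apply, smul_eq_mul,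
          Pi.single_eq_of_ne h]
        nlinarith [h0 i, mul_nonneg hθ0 (h0 i)]
    · by_cases hb : ‖y‖ ^ 2 / 4 ≤ x l / (1 - x l)
      · refine Or.inl ⟨hgood hb, Nat.le_succ_of_le (Finset.card_le_card ?_)⟩
        intro i hi
        simp only [Finset.mem_filter, Finset.mem_univ, true_and] at hi ⊢
        exact hsup i hi
      · right
        refine ⟨hmono, ?_⟩
        push Not at hb
        have hθe : θ = x l / (1 - x l) := by
          by_contra hne
          have hlt' := lt_of_le_of_ne hθm hne
          have := hdesc _ (hθ0.trans hθm) le_rfl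
          rw [vn_quad, vn_quad] at this
          generalize x l / (1 - x l) = T at *
          generalize ‖y‖ ^ 2 = Y at *
          have h3 : (T - θ) * (2 * ⟪d, y⟫ + (T + θ) * ‖d‖ ^ 2) < 0 := by
            apply mul_neg_of_pos_of_neg (by linarith)
            nlinarith [mul_le_mul_of_nonneg_left hdd (by linarith : 0 ≤ T + θ)]
          nlinarith
        have hl1 : x l < 1 := by
          refine lt_of_le_of_ne (hle l) fun h => ?_
          have hz : ∀ i, i ≠ l → x i = 0 := by
            intro i hi
            have := Finset.add_sum_erase Finset.univ x (Finset.mem_univ l)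
            have h5 : ∑ i ∈ Finset.univ.erase l, x i = 0 := by linarith
            exact (Finset.sum_eq_zero_iff_of_nonneg (fun i _ => h0 i)).1 h5 i (by simp [hi])
          have hxs : x = Pi.single l 1 := by
            ext i
            by_cases hi : i = l
            · subst hi; simp [h]
            · rw [hz i hi, Pi.single_eq_of_ne hi]
          have hd0 : d = 0 := by
            rw [← hcu, hxs]; simp [comb]
          rw [hd0, inner_zero_left] at hdy
          have h00 : x l / (1 - x l) = 0 := by rw [h]; simp
          rw [h00] at hb
          linarith
        have hx'l : (x + θ • (x - Pi.single l 1) : Fin n → ℝ) l = 0 := by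
          have : θ * (1 - x l) = x l := by
            rw [hθe]; exact div_mul_cancel₀ _ (by linarith)
          simp
          linarith
        apply Nat.succ_le_of_lt
        apply Finset.card_lt_card
        rw [Finset.ssubset_iff_of_subset]
        · exact ⟨l, by simp [hl0], by rw [Finset.mem_filter, hx'l]; simp⟩
        · intro i hi
          simp only [Finset.mem_filter, Finset.mem_univ, true_and] at hi ⊢
          exact hsup i hi

/-- sublinear convergence of the von Neumann algorithm with away steps:
as long as the algorithm has not halted (each `Aᵀ y i`, `i ≤ k`, has a nonpositive
component), `‖y k‖² ≤ 8 / k`. -/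
theorem stmt6 (m n : ℕ) (hn : 0 < n) (a : Fin n → EuclideanSpace ℝ (Fin m))
    (hnorm : ∀ i, ‖a i‖ = 1)
    (x : ℕ → Fin n → ℝ) (y : ℕ → EuclideanSpace ℝ (Fin m))
    (hy : ∀ k, y k = comb a (x k))
    (hx0 : ∃ i : Fin n, x 0 = Pi.single i 1)
    (hstep : ∀ k : ℕ, VNAwayStep a (x k) (x (k + 1)) (y k)) :
    ∀ k : ℕ, 1 ≤ k → (∀ i : ℕ, i ≤ k → ∃ j : Fin n, ⟪a j, y i⟫ ≤ 0) →
      ‖y k‖ ^ 2 ≤ 8 / (k : ℝ) := by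
  intro k hk hhalt
  obtain ⟨i0, hi0⟩ := hx0
  have key : ∀ r : ℕ, r ≤ k → (∀ i, 0 ≤ x r i) ∧ ∑ i, x r i = 1 ∧
      ‖y r‖ ^ 2 * ((r : ℝ) + vnS (x r)) ≤ 8 := by
    intro r
    induction r with
    | zero =>
      intro _
      refine ⟨fun i => ?_, ?_, ?_⟩
      · rw [hi0]
        by_cases h : i = i0
        · subst h; simp
        · simp [Pi.single_eq_of_ne h]
      · rw [hi0]; simp
      · have hS : vnS (x 0) = 1 := by
          unfold vnS
          rw [Finset.card_eq_one]
          refine ⟨i0, ?_⟩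
          ext i
          by_cases h : i = i0
          · subst h; simp [hi0]
          · simp [hi0, Pi.single_eq_of_ne h, h]
        rw [hS, hy, hi0, vn_comb_single, hnorm]
        norm_num
    | succ r ih =>
      intro hr
      obtain ⟨h0, h1, h8⟩ := ih (by omega)
      have hst := hstep r
      have hh := hhalt r (by omega)
      have hN := vn_comb_norm a hnorm (x r) h0 h1
      rw [hy r] at hst hh h8
      obtain ⟨h0', h1', hcase⟩ := vn_step a hnorm _ _ h0 h1 hst hh
      refine ⟨h0', h1', ?_⟩
      rw [hy (r + 1)]
      rcases hcase with ⟨hA, hB⟩ | ⟨hA, hB⟩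
      · have hB' : (vnS (x (r + 1)) : ℝ) ≤ vnS (x r) + 1 := by exact_mod_cast hB
        refine vn_arith _ _ _ _ (by positivity) ?_ h8 (by positivity) hA (by positivity) ?_
        · nlinarith [norm_nonneg (comb a (x r))]
        · push_cast; linarith
      · have hB' : (vnS (x (r + 1)) : ℝ) + 1 ≤ vnS (x r) := by exact_mod_cast hB
        refine le_trans (mul_le_mul hA ?_ (by positivity) (by positivity)) h8
        push_cast; linarith
  obtain ⟨-, -, h8⟩ := key k le_rfl
  have hk' : (0 : ℝ) < k := by exact_mod_cast hk
  rw [le_div_iff₀ hk']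
  refine le_trans ?_ h8
  have : (0 : ℝ) ≤ vnS (x k) := by positivity
  exact mul_le_mul_of_nonneg_left (by linarith) (by positivity)
end

section
/- Let A = [a_1, ..., a_n] ∈ ℝ^{m×n} be nonzero, Q ∈ ℝ^{m×m} symmetric positive definite, b ∈ ℝ^m, f(y) := (1/2)⟨y, Qy⟩ + ⟨b, y⟩. Let x* ∈ Δ_{n−1} minimize f(Ax) over Δ_{n−1}, y* := Ax*, Ā := Q^{1/2}[a_1 − y*, ..., a_n − y*]. Consider the Frank–Wolfe algorithm with away steps: x_0 a vertex of Δ_{n−1}, y_k = A x_k; at step k, j minimizes ⟨a_i, ∇f(y_k)⟩ over i, ℓ maximizes ⟨a_i, ∇f(y_k)⟩ over i ∈ S(x_k); if ⟨a_j − y_k, ∇f(y_k)⟩ < ⟨y_k − a_ℓ, ∇f(y_k)⟩ set a := a_j − y_k, u := e_j − x_k, θ_max := 1, otherwise a := y_k − a_ℓ, u := x_k − e_ℓ, θ_max := (x_k)_ℓ/(1 − (x_k)_ℓ); θ_k minimizes f(y_k + θ a) over [0, θ_max]; x_{k+1} := x_k + θ_k u. Then for all k ≥ 1: f(y_k) −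 f(y*) ≤ (1 − φ(Ā)²/(4 d(Ā)²))^{k/2} (f(y_0) − f(y*)). -/
open scoped RealInnerProductSpace BigOperators

/-- `φ(A, x) = sup {λ > 0 : ∃ u v ∈ Δ_{n-1}, S(u) ⊆ S(x), Au - Av = (λ/‖Ax‖) Ax}`. -/
noncomputable def phiAt {m n : ℕ} (a : Fin n → EuclideanSpace ℝ (Fin m))
    (x : Fin n → ℝ) : ℝ :=
  sSup {lam : ℝ | 0 < lam ∧ ∃ u ∈ stdSimplex ℝ (Fin n), ∃ v ∈ stdSimplex ℝ (Fin n),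
    (∀ i, 0 < u i → 0 < x i) ∧
    comb a u - comb a v = (lam / ‖comb a x‖) • comb a x}

/-- The restricted width `φ(A) = min {φ(A, x) : x ≥ 0, Ax ≠ 0}`. -/
noncomputable def phi {m n : ℕ} (a : Fin n → EuclideanSpace ℝ (Fin m)) : ℝ :=
  sInf {t : ℝ | ∃ x : Fin n → ℝ, (∀ i, 0 ≤ x i) ∧ comb a x ≠ 0 ∧ t = phiAt a x}

/-- The diameter `d(A) = max_{x, u ∈ Δ_{n-1}} ‖Ax - Au‖`. -/
noncomputable def diam {m n : ℕ} (a : Fin n → EuclideanSpace ℝ (Fin m)) : ℝ :=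
  sSup {t : ℝ | ∃ u ∈ stdSimplex ℝ (Fin n), ∃ v ∈ stdSimplex ℝ (Fin n),
    t = ‖comb a u - comb a v‖}

/-- One iteration of the Frank–Wolfe algorithm with away steps for minimizing `f` over
`conv(A)`, mapping `x` to `x'`, where `y = Ax` and `g = ∇f(y)`:
`j` minimizes `⟪a i, g⟫`, `ℓ` maximizes `⟪a i, g⟫` over the support of `x`; a regular
step (`d = a j - y`, `u = e j - x`, `θmax = 1`) is taken when
`⟪a j - y, g⟫ < ⟪y - a ℓ, g⟫`, otherwise an away step
(`d = y - a ℓ`, `u = x - e ℓ`, `θmax = x ℓ / (1 - x ℓ)`);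
`θ` minimizes `f (y + θ • d)` over `[0, θmax]` and `x' = x + θ • u`. -/
def FWAwayStep {m n : ℕ} (a : Fin n → EuclideanSpace ℝ (Fin m))
    (f : EuclideanSpace ℝ (Fin m) → ℝ) (x x' : Fin n → ℝ)
    (y g : EuclideanSpace ℝ (Fin m)) : Prop :=
  ∃ (j ℓ : Fin n) (d : EuclideanSpace ℝ (Fin m)) (u : Fin n → ℝ) (θmax θ : ℝ),
    (∀ i, ⟪a j, g⟫ ≤ ⟪a i, g⟫) ∧
    0 < x ℓ ∧ (∀ i, 0 < x i → ⟪a i, g⟫ ≤ ⟪a ℓ, g⟫) ∧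
    ((⟪a j - y, g⟫ < ⟪y - a ℓ, g⟫ ∧
        d = a j - y ∧ u = Pi.single j 1 - x ∧ θmax = 1) ∨
     (¬ (⟪a j - y, g⟫ < ⟪y - a ℓ, g⟫) ∧
        d = y - a ℓ ∧ u = x - Pi.single ℓ 1 ∧ θmax = x ℓ / (1 - x ℓ))) ∧
    0 ≤ θ ∧ θ ≤ θmax ∧
    (∀ θ' : ℝ, 0 ≤ θ' → θ' ≤ θmax → f (y + θ • d) ≤ f (y + θ' • d)) ∧
    x' = x + θ • u

lemma comb_sub' {m n : ℕ} (a : Fin n → EuclideanSpace ℝ (Fin m)) (u v : Fin n → ℝ) :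
    comb a (u - v) = comb a u - comb a v := by
  simp [comb, sub_smul, Finset.sum_sub_distrib]

lemma comb_add' {m n : ℕ} (a : Fin n → EuclideanSpace ℝ (Fin m)) (u v : Fin n → ℝ) :
    comb a (u + v) = comb a u + comb a v := by
  simp [comb, add_smul, Finset.sum_add_distrib]

lemma comb_smul' {m n : ℕ} (a : Fin n → EuclideanSpace ℝ (Fin m)) (t : ℝ) (u : Fin n → ℝ) :
    comb a (t • u) = t • comb a u := by
  simp [comb, Finset.smul_sum, smul_smul]

lemma comb_single' {m n : ℕ} (a : Fin n → EuclideanSpace ℝ (Fin m)) (i : Fin n) :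
    comb a (Pi.single i 1) = a i := by
  simp [comb, Pi.single_apply, ite_smul]

lemma comb_inner {m n : ℕ} (a : Fin n → EuclideanSpace ℝ (Fin m)) (u : Fin n → ℝ)
    (g : EuclideanSpace ℝ (Fin m)) : ⟪comb a u, g⟫ = ∑ i, u i * ⟪a i, g⟫ := by
  simp [comb, sum_inner, real_inner_smul_left]

lemma diam_le {m n : ℕ} (a : Fin n → EuclideanSpace ℝ (Fin m)) {u v : Fin n → ℝ}
    (hu : u ∈ stdSimplex ℝ (Fin n)) (hv : v ∈ stdSimplex ℝ (Fin n)) :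
    ‖comb a u - comb a v‖ ≤ diam a := by
  have key : ∀ w ∈ stdSimplex ℝ (Fin n), ‖comb a w‖ ≤ ∑ i, ‖a i‖ := by
    intro w hw
    refine (norm_sum_le _ _).trans (Finset.sum_le_sum fun i _ => ?_)
    rw [norm_smul, Real.norm_of_nonneg (hw.1 i)]
    have : w i ≤ 1 := by
      rw [← hw.2]; exact Finset.single_le_sum (fun j _ => hw.1 j) (Finset.mem_univ i)
    exact mul_le_of_le_one_left (norm_nonneg _) this
  refine le_csSup ⟨(∑ i, ‖a i‖) + ∑ i, ‖a i‖, ?_⟩ ⟨u, hu, v, hv, rfl⟩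
  rintro t ⟨u, hu, v, hv, rfl⟩
  exact (norm_sub_le _ _).trans (add_le_add (key u hu) (key v hv))

lemma diam_nonneg' {m n : ℕ} (a : Fin n → EuclideanSpace ℝ (Fin m)) : 0 ≤ diam a := by
  apply Real.sSup_nonneg
  rintro t ⟨u, hu, v, hv, rfl⟩
  exact norm_nonneg _

lemma phiAt_nonneg {m n : ℕ} (a : Fin n → EuclideanSpace ℝ (Fin m)) (x : Fin n → ℝ) :
    0 ≤ phiAt a x := by
  apply Real.sSup_nonneg
  rintro t ⟨ht, _⟩
  exact ht.le

lemma phi_nonneg {m n : ℕ} (a : Fin n → EuclideanSpace ℝ (Fin m)) : 0 ≤ phi a := by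
  apply Real.sInf_nonneg
  rintro t ⟨x, _, _, rfl⟩
  exact phiAt_nonneg a x

lemma phi_le_phiAt {m n : ℕ} (a : Fin n → EuclideanSpace ℝ (Fin m)) (x : Fin n → ℝ)
    (hx : ∀ i, 0 ≤ x i) (h : comb a x ≠ 0) : phi a ≤ phiAt a x := by
  refine csInf_le ⟨0, ?_⟩ ⟨x, hx, h, rfl⟩
  rintro t ⟨x, _, _, rfl⟩
  exact phiAt_nonneg a x

lemma phi_le_diam {m n : ℕ} (a : Fin n → EuclideanSpace ℝ (Fin m)) : phi a ≤ diam a := by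
  by_cases h : ∃ x : Fin n → ℝ, (∀ i, 0 ≤ x i) ∧ comb a x ≠ 0
  · obtain ⟨x, hx, h0⟩ := h
    refine (phi_le_phiAt a x hx h0).trans (Real.sSup_le ?_ (diam_nonneg' a))
    rintro t ⟨ht, u, hu, v, hv, -, he⟩
    have h1 := diam_le a hu hv
    rw [he, norm_smul, Real.norm_of_nonneg (by positivity),
      div_mul_cancel₀ _ (norm_ne_zero_iff.2 h0)] at h1
    exact h1
  · have : {t : ℝ | ∃ x : Fin n → ℝ, (∀ i, 0 ≤ x i) ∧ comb a x ≠ 0 ∧ t = phiAt a x} = ∅ := by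
      ext t
      simp only [Set.mem_setOf_eq, Set.mem_empty_iff_false, iff_false]
      rintro ⟨x, hx, h0, -⟩
      exact h ⟨x, hx, h0⟩
    rw [phi, this, Real.sInf_empty]
    exact diam_nonneg' a

/-- support size -/
noncomputable def suppCard {n : ℕ} (x : Fin n → ℝ) : ℕ := (Finset.univ.filter fun i => 0 < x i).card

lemma simplex_step {m n : ℕ} {a : Fin n → EuclideanSpace ℝ (Fin m)}
    {f : EuclideanSpace ℝ (Fin m) → ℝ} {x x' : Fin n → ℝ}
    {y g : EuclideanSpace ℝ (Fin m)} (hx : x ∈ stdSimplex ℝ (Fin n))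
    (h : FWAwayStep a f x x' y g) : x' ∈ stdSimplex ℝ (Fin n) := by
  obtain ⟨j, ℓ, d, u, θm, θ, -, hℓ, -, hc, h0, h1, -, rfl⟩ := h
  rcases hc with ⟨-, -, rfl, rfl⟩ | ⟨-, -, rfl, rfl⟩
  · constructor
    · intro i
      have := hx.1 i
      simp only [Pi.add_apply, Pi.smul_apply, Pi.sub_apply, smul_eq_mul, Pi.single_apply]
      split_ifs <;> nlinarith
    · simp [Finset.sum_add_distrib, ← Finset.mul_sum, hx.2]
  · have hl1 : x ℓ ≤ 1 := by
      rw [← hx.2]; exact Finset.single_le_sum (fun j _ => hx.1 j) (Finset.mem_univ ℓ)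
    have h2 : θ * (1 - x ℓ) ≤ x ℓ := by
      rcases hl1.eq_or_lt with h | h
      · rw [h]; norm_num
      · rwa [le_div_iff₀ (by linarith)] at h1
    constructor
    · intro i
      have := hx.1 i
      simp only [Pi.add_apply, Pi.smul_apply, Pi.sub_apply, smul_eq_mul, Pi.single_apply]
      split_ifs with hi
      · subst hi; nlinarith
      · nlinarith [mul_nonneg h0 this]
    · simp [Finset.sum_add_distrib, ← Finset.mul_sum, hx.2]

lemma simplex_inner_le {m n : ℕ} (a : Fin n → EuclideanSpace ℝ (Fin m)) {u x : Fin n → ℝ}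
    {g : EuclideanSpace ℝ (Fin m)} {c : ℝ} (hu : u ∈ stdSimplex ℝ (Fin n))
    (hs : ∀ i, 0 < u i → 0 < x i) (h : ∀ i, 0 < x i → ⟪a i, g⟫ ≤ c) : ⟪comb a u, g⟫ ≤ c := by
  rw [comb_inner]
  calc ∑ i, u i * ⟪a i, g⟫ ≤ ∑ i, u i * c := by
        refine Finset.sum_le_sum fun i _ => ?_
        rcases (hu.1 i).eq_or_lt with h0 | h0
        · rw [← h0]; simp
        · exact mul_le_mul_of_nonneg_left (h i (hs i h0)) h0.le
    _ = c := by rw [← Finset.sum_mul, hu.2, one_mul]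

lemma simplex_le_inner {m n : ℕ} (a : Fin n → EuclideanSpace ℝ (Fin m)) {u : Fin n → ℝ}
    {g : EuclideanSpace ℝ (Fin m)} {c : ℝ} (hu : u ∈ stdSimplex ℝ (Fin n))
    (h : ∀ i, c ≤ ⟪a i, g⟫) : c ≤ ⟪comb a u, g⟫ := by
  rw [comb_inner]
  calc c = ∑ i, u i * c := by rw [← Finset.sum_mul, hu.2, one_mul]
    _ ≤ _ := Finset.sum_le_sum fun i _ => mul_le_mul_of_nonneg_left (h i) (hu.1 i)

lemma comb_bar {m n : ℕ} {a abar : Fin n → EuclideanSpace ℝ (Fin m)}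
    {R : EuclideanSpace ℝ (Fin m) →ₗ[ℝ] EuclideanSpace ℝ (Fin m)} {ystar : EuclideanSpace ℝ (Fin m)}
    (habar : ∀ i, abar i = R (a i - ystar)) {u : Fin n → ℝ} (hu : u ∈ stdSimplex ℝ (Fin n)) :
    comb abar u = R (comb a u - ystar) := by
  have : ystar = ∑ i, u i • ystar := by rw [← Finset.sum_smul, hu.2, one_smul]
  conv_rhs => rw [this]
  simp only [comb, habar, ← Finset.sum_sub_distrib, map_sum, ← smul_sub, map_smul]

lemma key_bound {m n : ℕ} {a abar : Fin n → EuclideanSpace ℝ (Fin m)}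
    {R : EuclideanSpace ℝ (Fin m) →ₗ[ℝ] EuclideanSpace ℝ (Fin m)} {ystar : EuclideanSpace ℝ (Fin m)}
    (hR : Function.Injective R)
    (habar : ∀ i, abar i = R (a i - ystar)) {x : Fin n → ℝ} (hx : x ∈ stdSimplex ℝ (Fin n))
    {g : EuclideanSpace ℝ (Fin m)} {h c : ℝ} {j ℓ : Fin n}
    (hj : ∀ i, ⟪a j, g⟫ ≤ ⟪a i, g⟫) (hl : ∀ i, 0 < x i → ⟪a i, g⟫ ≤ ⟪a ℓ, g⟫)
    (hh : ⟪comb a x - ystar, g⟫ = h + 1 / 2 * ‖R (comb a x - ystar)‖ ^ 2)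
    (hc : ⟪a ℓ, g⟫ - ⟪a j, g⟫ ≤ 2 * c) (hc0 : 0 ≤ c) (h0 : 0 ≤ h) :
    phi abar ^ 2 * h ≤ 2 * c ^ 2 := by
  by_cases hp : comb a x - ystar = 0
  · rw [hp] at hh
    simp at hh
    rw [← hh]; simp; positivity
  have hp' : comb abar x ≠ 0 := by
    rw [comb_bar habar hx]
    intro h; apply hp; apply hR; rw [h, map_zero]
  have hP : 0 < ‖comb abar x‖ := norm_pos_iff.2 hp'
  rw [← comb_bar habar hx] at hh
  set P := ‖comb abar x‖ with hPdef
  have hW : 0 < h + 1 / 2 * P ^ 2 := by positivity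
  have h1 : phi abar ≤ 2 * c * P / (h + 1 / 2 * P ^ 2) := by
    refine (phi_le_phiAt abar x hx.1 hp').trans (Real.sSup_le ?_ (by positivity))
    rintro t ⟨ht, u, hu, v, hv, hs, he⟩
    rw [comb_bar habar hu, comb_bar habar hv, comb_bar habar hx, ← map_sub, ← map_smul] at he
    have he := hR he
    rw [← comb_bar habar hx, ← hPdef] at he
    have e1 := simplex_inner_le a hu hs hl
    have e2 := simplex_le_inner a hv hj
    have e3 : ⟪comb a u, g⟫ - ⟪comb a v, g⟫ = t / P * (h + 1 / 2 * P ^ 2) := by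
      rw [← hh, ← real_inner_smul_left, ← he, sub_sub_sub_cancel_right, inner_sub_left]
    rw [le_div_iff₀ hW]
    have e4 : t / P * (h + 1 / 2 * P ^ 2) ≤ 2 * c := by linarith
    calc t * (h + 1 / 2 * P ^ 2) = (t / P * (h + 1 / 2 * P ^ 2)) * P := by field_simp
      _ ≤ _ := mul_le_mul_of_nonneg_right e4 hP.le
  rw [le_div_iff₀ hW] at h1
  have h2 : (phi abar * (h + 1 / 2 * P ^ 2)) ^ 2 ≤ (2 * c * P) ^ 2 :=
    pow_le_pow_left₀ (mul_nonneg (phi_nonneg _) hW.le) h1 2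
  have h3 : 2 * h * P ^ 2 ≤ (h + 1 / 2 * P ^ 2) ^ 2 := by nlinarith [sq_nonneg (h - 1 / 2 * P ^ 2)]
  have h4 : phi abar ^ 2 * (2 * h * P ^ 2) ≤ phi abar ^ 2 * (h + 1 / 2 * P ^ 2) ^ 2 :=
    mul_le_mul_of_nonneg_left h3 (sq_nonneg _)
  have h5 : (phi abar ^ 2 * h) * (2 * P ^ 2) ≤ (2 * c ^ 2) * (2 * P ^ 2) := by nlinarith
  exact le_of_mul_le_mul_right h5 (by positivity)

lemma ratio_le {m n : ℕ} (a : Fin n → EuclideanSpace ℝ (Fin m)) :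
    phi a ^ 2 / (4 * diam a ^ 2) ≤ 1 / 4 := by
  rcases (diam_nonneg' a).eq_or_lt with h | h
  · rw [← h]; norm_num
  · rw [div_le_iff₀ (by positivity)]
    nlinarith [pow_le_pow_left₀ (phi_nonneg a) (phi_le_diam a) 2]

lemma main_step {m n : ℕ} {a abar : Fin n → EuclideanSpace ℝ (Fin m)}
    {R : EuclideanSpace ℝ (Fin m) →ₗ[ℝ] EuclideanSpace ℝ (Fin m)} {ystar : EuclideanSpace ℝ (Fin m)}
    (hR : Function.Injective R) {f : EuclideanSpace ℝ (Fin m) → ℝ}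
    {g y : EuclideanSpace ℝ (Fin m)}
    (hexp : ∀ d, f (y + d) = f y + ⟪d, g⟫ + 1 / 2 * ‖R d‖ ^ 2)
    {xstar : Fin n → ℝ} (hxs : xstar ∈ stdSimplex ℝ (Fin n)) (hys : ystar = comb a xstar)
    (habar : ∀ i, abar i = R (a i - ystar)) {x x' : Fin n → ℝ} (hx : x ∈ stdSimplex ℝ (Fin n))
    (hy : y = comb a x) (h0 : f ystar ≤ f y)
    (hstep : FWAwayStep a f x x' y g) :
    (f (comb a x') - f ystar ≤ (1 - phi abar ^ 2 / (4 * diam abar ^ 2)) * (f y - f ystar) ∧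
      suppCard x' ≤ suppCard x + 1) ∨
    (f (comb a x') - f ystar ≤ f y - f ystar ∧ suppCard x' + 1 ≤ suppCard x) := by
  obtain ⟨j, ℓ, d, u, θm, θ, hj, hℓ, hl, hc, hθ0, hθm, hopt, rfl⟩ := hstep
  have hℓ1 : x ℓ ≤ 1 := by
    rw [← hx.2]; exact Finset.single_le_sum (fun j _ => hx.1 j) (Finset.mem_univ ℓ)
  have hD0 := diam_nonneg' abar
  have hratio := ratio_le abar
  have hratio0 : 0 ≤ phi abar ^ 2 / (4 * diam abar ^ 2) := by positivity
  have hcomb : comb a (x + θ • u) = y + θ • d := by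
    rw [comb_add', comb_smul', ← hy]
    rcases hc with ⟨-, rfl, rfl, -⟩ | ⟨-, rfl, rfl, -⟩ <;> rw [comb_sub', comb_single', hy]
  have hd : ‖R d‖ ≤ diam abar := by
    have hs : ∀ i : Fin n, Pi.single i (1 : ℝ) ∈ stdSimplex ℝ (Fin n) :=
      fun i => single_mem_stdSimplex ℝ i
    rcases hc with ⟨-, rfl, -, -⟩ | ⟨-, rfl, -, -⟩
    · have := diam_le abar (hs j) hx
      rwa [comb_bar habar (hs j), comb_bar habar hx, ← map_sub, sub_sub_sub_cancel_right,
        comb_single', ← hy] at this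
    · have := diam_le abar hx (hs ℓ)
      rwa [comb_bar habar (hs ℓ), comb_bar habar hx, ← map_sub, sub_sub_sub_cancel_right,
        comb_single', ← hy] at this
  have hval : ∀ t : ℝ, f (y + t • d) = f y + t * ⟪d, g⟫ + 1 / 2 * t ^ 2 * ‖R d‖ ^ 2 := by
    intro t
    rw [hexp, real_inner_smul_left, map_smul, norm_smul, mul_pow, Real.norm_eq_abs, sq_abs]
    ring
  have hhh : ⟪y - ystar, g⟫ = (f y - f ystar) + 1 / 2 * ‖R (y - ystar)‖ ^ 2 := by
    have := hexp (ystar - y)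
    rw [add_sub_cancel, ← neg_sub y ystar, inner_neg_left, map_neg, norm_neg] at this
    linarith
  have hyl : ⟪y, g⟫ ≤ ⟪a ℓ, g⟫ := by rw [hy]; exact simplex_inner_le a hx (fun i h => h) hl
  have hjy : ⟪a j, g⟫ ≤ ⟪y, g⟫ := by rw [hy]; exact simplex_le_inner a hx hj
  have hjs : ⟪a j, g⟫ ≤ ⟪ystar, g⟫ := by rw [hys]; exact simplex_le_inner a hxs hj
  have hgap : f y - f ystar ≤ ⟪y, g⟫ - ⟪a j, g⟫ := by
    rw [inner_sub_left] at hhh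
    nlinarith [sq_nonneg ‖R (y - ystar)‖]
  obtain ⟨c, hcd⟩ : ∃ c, c = - ⟪d, g⟫ := ⟨_, rfl⟩
  have hc2 : ⟪a ℓ, g⟫ - ⟪a j, g⟫ ≤ 2 * c := by
    rcases hc with ⟨h, rfl, -, -⟩ | ⟨h, rfl, -, -⟩ <;> simp only [inner_sub_left] at h hcd <;> linarith
  have hc0 : 0 ≤ c := by linarith
  have hkey : phi abar ^ 2 * (f y - f ystar) ≤ 2 * c ^ 2 := by
    refine key_bound hR habar hx hj hl ?_ hc2 hc0 (by linarith)
    rw [← hy]; exact hhh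
  have hdg : ⟪d, g⟫ = -c := by linarith
  rw [hdg] at hval
  have hθm0 : 0 ≤ θm := hθ0.trans hθm
  have hmono : f (y + θ • d) ≤ f y := by
    have := hopt 0 le_rfl hθm0
    simpa using this
  rw [hcomb]
  -- support for the non-drop steps
  have hsup : suppCard (x + θ • u) ≤ suppCard x + 1 := by
    classical
    have hsub : (Finset.univ.filter fun i => 0 < (x + θ • u) i) ⊆
        insert j (Finset.univ.filter fun i => 0 < x i) := by
      intro i
      simp only [Finset.mem_filter, Finset.mem_univ, true_and, Finset.mem_insert]
      intro hi
      by_contra hcon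
      push Not at hcon
      have hxi : x i = 0 := le_antisymm hcon.2 (hx.1 i)
      have hiℓ : i ≠ ℓ := by rintro rfl; linarith
      rcases hc with ⟨-, -, rfl, -⟩ | ⟨-, -, rfl, -⟩
      · simp [Pi.single_apply, hcon.1, hxi] at hi
      · simp [Pi.single_apply, hiℓ, hxi] at hi
    exact (Finset.card_le_card hsub).trans (Finset.card_insert_le _ _)
  have hq : ‖R d‖ ^ 2 ≤ diam abar ^ 2 := pow_le_pow_left₀ (norm_nonneg _) hd 2
  have hq0 : 0 ≤ ‖R d‖ ^ 2 := sq_nonneg _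
  rcases hD0.eq_or_lt with hDz | hD
  · left
    refine ⟨?_, hsup⟩
    rw [← hDz]; simpa using hmono
  have hr : phi abar ^ 2 / (4 * diam abar ^ 2) * (f y - f ystar) ≤ c ^ 2 / (2 * diam abar ^ 2) := by
    rw [div_mul_eq_mul_div, div_le_div_iff₀ (by positivity) (by positivity)]
    nlinarith [mul_le_mul_of_nonneg_right hkey (sq_nonneg (diam abar))]
  rcases le_or_gt (c / diam abar ^ 2) θm with ht | ht
  · left
    refine ⟨?_, hsup⟩
    have h1 := hopt _ (by positivity) ht
    rw [hval (c / diam abar ^ 2)] at h1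
    have h2 : 1 / 2 * (c / diam abar ^ 2) ^ 2 * ‖R d‖ ^ 2 ≤
        1 / 2 * (c / diam abar ^ 2) ^ 2 * diam abar ^ 2 :=
      mul_le_mul_of_nonneg_left hq (by positivity)
    have h3 : c / diam abar ^ 2 * -c + 1 / 2 * (c / diam abar ^ 2) ^ 2 * diam abar ^ 2 =
        - (c ^ 2 / (2 * diam abar ^ 2)) := by field_simp; ring
    linarith
  rw [lt_div_iff₀ (by positivity)] at ht
  have hsmall : phi abar ^ 2 / (4 * diam abar ^ 2) * (f y - f ystar) ≤ 1 / 4 * (f y - f ystar) :=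
    mul_le_mul_of_nonneg_right hratio (by linarith)
  rcases hc with ⟨hlt, rfl, rfl, rfl⟩ | ⟨hlt, rfl, rfl, rfl⟩
  · left
    refine ⟨?_, hsup⟩
    have h1 := hopt 1 (by norm_num) le_rfl
    rw [hval 1] at h1
    rw [inner_sub_left] at hdg
    linarith
  · have hθ : θ = x ℓ / (1 - x ℓ) := by
      by_contra hne
      have hlt' : θ < x ℓ / (1 - x ℓ) := lt_of_le_of_ne hθm hne
      have h1 := hopt _ hθm0 le_rfl
      rw [hval, hval] at h1
      set T := x ℓ / (1 - x ℓ)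
      set q := ‖R (y - a ℓ)‖ ^ 2
      have h2 : (T + θ) * q ≤ 2 * T * diam abar ^ 2 :=
        mul_le_mul (by linarith) hq hq0 (by linarith)
      have h3 : 0 ≤ (T - θ) * ((T + θ) * q - 2 * c) := by nlinarith
      have h4 : (T - θ) * ((T + θ) * q - 2 * c) < 0 :=
        mul_neg_of_pos_of_neg (by linarith) (by linarith)
      linarith
    rcases hℓ1.eq_or_lt with h1 | h1
    · left
      refine ⟨?_, hsup⟩
      have hxe : x = Pi.single ℓ 1 := by
        have hz : ∑ i ∈ Finset.univ.erase ℓ, x i = 0 := by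
          have := Finset.add_sum_erase Finset.univ x (Finset.mem_univ ℓ)
          rw [hx.2] at this; linarith
        rw [Finset.sum_eq_zero_iff_of_nonneg (fun i _ => hx.1 i)] at hz
        ext i
        by_cases hi : i = ℓ
        · subst hi; simp [h1]
        · simp [Pi.single_apply, hi, hz i (by simp [hi])]
      have hya : y = a ℓ := by rw [hy, hxe, comb_single']
      have hcz : c = 0 := by rw [hcd, hya]; simp
      have hz : f y - f ystar = 0 := by linarith
      rw [hz]; linarith
    · right
      refine ⟨by linarith, ?_⟩
      have hne : (1 - x ℓ) ≠ 0 := by linarith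
      have hsub : (Finset.univ.filter fun i => 0 < (x + θ • (x - Pi.single ℓ 1 : Fin n → ℝ) : Fin n → ℝ) i) ⊂
          (Finset.univ.filter fun i => 0 < x i) := by
        rw [Finset.ssubset_iff_of_subset]
        · refine ⟨ℓ, by simpa using hℓ, ?_⟩
          have : x ℓ + θ * (x ℓ - 1) = 0 := by rw [hθ]; field_simp; ring
          simp [this]
        · intro i
          simp only [Finset.mem_filter, Finset.mem_univ, true_and]
          intro hi
          rcases (hx.1 i).eq_or_lt with hxi | hxi
          · have hiℓ : i ≠ ℓ := by rintro rfl; linarith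
            simp [Pi.single_apply, hiℓ, ← hxi] at hi
          · exact hxi
      exact Finset.card_lt_card hsub

/-- linear convergence of the Frank–Wolfe algorithm with away steps:
`f(y k) - f(y*) ≤ (1 - φ(Ā)²/(4 d(Ā)²))^(k/2) (f(y 0) - f(y*))`. -/
theorem stmt12 (m n : ℕ) (hn : 0 < n) (a : Fin n → EuclideanSpace ℝ (Fin m))
    (hA : ∃ i, a i ≠ 0)
    (Q : EuclideanSpace ℝ (Fin m) →ₗ[ℝ] EuclideanSpace ℝ (Fin m))
    (hsymm : ∀ u v : EuclideanSpace ℝ (Fin m), ⟪Q u, v⟫ = ⟪u, Q v⟫)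
    (hpd : ∀ v : EuclideanSpace ℝ (Fin m), v ≠ 0 → 0 < ⟪v, Q v⟫)
    (b : EuclideanSpace ℝ (Fin m)) (f : EuclideanSpace ℝ (Fin m) → ℝ)
    (hf : ∀ y, f y = 1 / 2 * ⟪y, Q y⟫ + ⟪b, y⟫)
    -- `R = Q^{1/2}`, the symmetric positive definite square root of `Q`
    (R : EuclideanSpace ℝ (Fin m) →ₗ[ℝ] EuclideanSpace ℝ (Fin m))
    (hRsymm : ∀ u v : EuclideanSpace ℝ (Fin m), ⟪R u, v⟫ = ⟪u, R v⟫)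
    (hRpd : ∀ v : EuclideanSpace ℝ (Fin m), v ≠ 0 → 0 < ⟪v, R v⟫)
    (hRsq : ∀ v, R (R v) = Q v)
    (xstar : Fin n → ℝ) (hxstar : xstar ∈ stdSimplex ℝ (Fin n))
    (hmin : ∀ x' ∈ stdSimplex ℝ (Fin n), f (comb a xstar) ≤ f (comb a x'))
    (ystar : EuclideanSpace ℝ (Fin m)) (hystar : ystar = comb a xstar)
    (abar : Fin n → EuclideanSpace ℝ (Fin m)) (habar : ∀ i, abar i = R (a i - ystar))
    (x : ℕ → Fin n → ℝ) (y : ℕ → EuclideanSpace ℝ (Fin m))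
    (hy : ∀ k, y k = comb a (x k))
    (hx0 : ∃ i : Fin n, x 0 = Pi.single i 1)
    (hstep : ∀ k : ℕ, FWAwayStep a f (x k) (x (k + 1)) (y k) (Q (y k) + b)) :
    ∀ k : ℕ, 1 ≤ k →
      f (y k) - f ystar ≤
        (1 - phi abar ^ 2 / (4 * diam abar ^ 2)) ^ ((k : ℝ) / 2) *
          (f (y 0) - f ystar) := by
  have hR : Function.Injective R := by
    rw [injective_iff_map_eq_zero]
    intro v hv
    by_contra hne
    have := hRpd v hne
    rw [hv, inner_zero_right] at this
    exact lt_irrefl _ this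
  have hexp : ∀ y d : EuclideanSpace ℝ (Fin m),
      f (y + d) = f y + ⟪d, Q y + b⟫ + 1 / 2 * ‖R d‖ ^ 2 := by
    intro y d
    have h1 : ‖R d‖ ^ 2 = ⟪d, Q d⟫ := by
      rw [← real_inner_self_eq_norm_sq, hRsymm, hRsq]
    have h2 : ⟪y, Q d⟫ = ⟪d, Q y⟫ := by rw [← hsymm, real_inner_comm]
    rw [hf, hf, h1, map_add]
    simp only [inner_add_left, inner_add_right]
    rw [h2, real_inner_comm d b]
    ring
  set r := 1 - phi abar ^ 2 / (4 * diam abar ^ 2) with hr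
  have hr1 : r ≤ 1 := by
    have : 0 ≤ phi abar ^ 2 / (4 * diam abar ^ 2) := by positivity
    linarith
  have hr0 : 0 < r := by have := ratio_le abar; linarith
  have hsim : ∀ k, x k ∈ stdSimplex ℝ (Fin n) := by
    intro k
    induction k with
    | zero => obtain ⟨i, hi⟩ := hx0; rw [hi]; exact single_mem_stdSimplex ℝ i
    | succ k ih => exact simplex_step ih (hstep k)
  have hlow : ∀ k, f ystar ≤ f (y k) := by
    intro k; rw [hystar, hy]; exact hmin _ (hsim k)
  have hind : ∀ k, ∃ G : ℕ, f (y k) - f ystar ≤ r ^ G * (f (y 0) - f ystar) ∧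
      k + suppCard (x k) ≤ 2 * G + 1 := by
    intro k
    induction k with
    | zero =>
      refine ⟨0, by simp, ?_⟩
      obtain ⟨i, hi⟩ := hx0
      have : suppCard (x 0) ≤ 1 := by
        rw [suppCard, Finset.card_le_one]
        intro p hp q hq
        simp only [hi, Finset.mem_filter, Finset.mem_univ, true_and, Pi.single_apply] at hp hq
        split_ifs at hp hq <;> simp_all
      omega
    | succ k ih =>
      obtain ⟨G, h1, h2⟩ := ih
      rcases main_step hR (hexp (y k)) hxstar hystar habar (hsim k) (hy k) (hlow k) (hstep k) with
        ⟨h3, h4⟩ | ⟨h3, h4⟩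
      · refine ⟨G + 1, ?_, by omega⟩
        rw [hy (k + 1), pow_succ', mul_assoc]
        exact h3.trans (mul_le_mul_of_nonneg_left h1 hr0.le)
      · refine ⟨G, ?_, by omega⟩
        rw [hy (k + 1)]
        exact h3.trans h1
  intro k _
  obtain ⟨G, h1, h2⟩ := hind k
  have hs : 1 ≤ suppCard (x k) := by
    obtain ⟨_, ℓ, _, _, _, _, _, hℓ, _⟩ := hstep k
    exact Finset.card_pos.2 ⟨ℓ, by simpa using hℓ⟩
  refine h1.trans (mul_le_mul_of_nonneg_right ?_ (by linarith [hlow 0]))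
  rw [← Real.rpow_natCast]
  apply Real.rpow_le_rpow_of_exponent_ge hr0 hr1
  have : (k : ℝ) ≤ 2 * G := by exact_mod_cast (by omega : k ≤ 2 * G)
  linarith
end
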